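/- arXiv:2505.14611 — 2 statements merged into one kernel-verified Lean document; each statement's English description precedes it below -/
import Mathlib

section
/- Let Δψ : B → ℝ and ψ1 : B → ℝ, assume δ := √( (1/ω0)·Σ_{ν∈B} w(ν)·Δψ(ν)² ) lies in (0, π), let α1, α2 > 0 and define k1, k2, K, α̃ accordingly. Define ψ̃(ς,ν) := ψ1(ν) + (Δψ(ν)/δ)·( arctan( k1·(ς + k2)/√K ) − arctan( k1·k2/√K ) ). Then for all ς ∈ ℝ and ν ∈ B: (a) α̃(ς)²·(∂ψ̃/∂ς)(ς,ν) = √K·Δψ(ν)/δ (a constant in ς); (b) α̃''(ς) = α̃(ς)·(1/ω0)·Σ_{ν∈B} w(ν)·((∂ψ̃/∂ς)(ς,ν))², i.e. the first geodesic equation of L2(B,α) holds; (c) α̃(ς)·(∂²ψ̃/∂ς²)(ς,ν) + 2·α̃'(ς)·(∂ψ̃/∂ς)(ς,ν) = 0, i.e. the second geodesic equation holds; and (d) ψ̃(0,ν) = ψ1(ν). -/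
/-- `k1 = α1² + α2² − 2·α1·α2·cos δ`. -/
noncomputable def k1c (α1 α2 δ : ℝ) : ℝ := α1^2 + α2^2 - 2*α1*α2*Real.cos δ

/-- `k2 = (−α1² + α1·α2·cos δ)/k1`. -/
noncomputable def k2c (α1 α2 δ : ℝ) : ℝ := (-α1^2 + α1*α2*Real.cos δ) / k1c α1 α2 δ

/-- `K = α1²·α2²·(sin δ)²`. -/
noncomputable def Kc (α1 α2 δ : ℝ) : ℝ := α1^2 * α2^2 * (Real.sin δ)^2

/-- `α̃(ς) = √( k1·(ς + k2)² + K/k1 )`. -/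
noncomputable def alphaT (α1 α2 δ ς : ℝ) : ℝ :=
  Real.sqrt (k1c α1 α2 δ * (ς + k2c α1 α2 δ)^2 + Kc α1 α2 δ / k1c α1 α2 δ)

/-- The geodesic phase
`ψ̃(ς,ν) = ψ1(ν) + (Δψ(ν)/δ)·(arctan( k1(ς+k2)/√K ) − arctan( k1·k2/√K ))`. -/
noncomputable def psiT {B : Type*} (α1 α2 δ : ℝ) (ψ1 Δψ : B → ℝ) (ς : ℝ) (ν : B) : ℝ :=
  ψ1 ν + (Δψ ν / δ) *
    (Real.arctan (k1c α1 α2 δ * (ς + k2c α1 α2 δ) / Real.sqrt (Kc α1 α2 δ)) -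
      Real.arctan (k1c α1 α2 δ * k2c α1 α2 δ / Real.sqrt (Kc α1 α2 δ)))

/-!
In the plane, the segment `ς ↦ (1 - ς) α1 + ς α2 e^{iδ}` has polar radius `α̃(ς)`, and up to a
constant its polar angle is the arctangent `θ` in `ψ̃`. A motion along a straight line satisfies
`r² θ' = const` (here `√K`) and `r'' = r θ'²`. Since `ψ̃(·, ν)` is `ψ1 ν + (Δψ ν / δ) (θ - θ(0))`
and the weighted mean of `(Δψ / δ)²` is `1`, these two laws become the two geodesic equations.
-/

open Real

section Calculus

theorem hasDerivAt_sqrt_quadratic {a b c t : ℝ} (hq : a * (t + b) ^ 2 + c ≠ 0) :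
    HasDerivAt (fun s => √(a * (s + b) ^ 2 + c)) (a * (t + b) / √(a * (t + b) ^ 2 + c)) t := by
  have hquad : HasDerivAt (fun s => a * (s + b) ^ 2 + c) (2 * (a * (t + b))) t := by
    refine (((((hasDerivAt_id' t).add_const b).fun_pow 2).const_mul a).add_const c).congr_deriv ?_
    ring
  exact (hquad.sqrt hq).congr_deriv (mul_div_mul_left _ _ two_ne_zero)

theorem hasDerivAt_linear_div_sqrt_quadratic {a b c t : ℝ} (hq : 0 < a * (t + b) ^ 2 + c) :
    HasDerivAt (fun s => a * (s + b) / √(a * (s + b) ^ 2 + c))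
      (a * c / √(a * (t + b) ^ 2 + c) ^ 3) t := by
  have hsqrt : √(a * (t + b) ^ 2 + c) ≠ 0 := (sqrt_pos.2 hq).ne'
  refine ((((hasDerivAt_id' t).add_const b).const_mul a).fun_div
    (hasDerivAt_sqrt_quadratic hq.ne') hsqrt).congr_deriv ?_
  field_simp
  rw [sq_sqrt hq.le]
  ring

theorem hasDerivAt_arctan_linear_div {a b c t : ℝ} (ha : a ≠ 0) (hc : c ≠ 0) :
    HasDerivAt (fun s => arctan (a * (s + b) / c)) (c / (a * (t + b) ^ 2 + c ^ 2 / a)) t := by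
  refine ((((hasDerivAt_id' t).add_const b).const_mul a).div_const c).arctan.congr_deriv ?_
  have hden : a ^ 2 * (t + b) ^ 2 + c ^ 2 ≠ 0 := by positivity
  have hone : 1 + (a * (t + b) / c) ^ 2 = (a ^ 2 * (t + b) ^ 2 + c ^ 2) / c ^ 2 := by
    field_simp
    ring
  have hquad : a * (t + b) ^ 2 + c ^ 2 / a = (a ^ 2 * (t + b) ^ 2 + c ^ 2) / a := by
    field_simp
  rw [hone, hquad]
  field_simp

theorem mul_deriv_deriv_add_eq_zero_of_deriv_eq_div_sq {𝕜 : Type*}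
    [NontriviallyNormedField 𝕜] {α ψ : 𝕜 → 𝕜} {C t : 𝕜} (hα : DifferentiableAt 𝕜 α t)
    (hα0 : α t ≠ 0) (hψ : deriv ψ = fun s => C / α s ^ 2) :
    α t * deriv (deriv ψ) t + 2 * deriv α t * deriv ψ t = 0 := by
  have hψ' : HasDerivAt (deriv ψ) (-(C * (2 * α t * deriv α t)) / (α t ^ 2) ^ 2) t := by
    rw [hψ]
    refine ((hasDerivAt_const t C).fun_div (hα.hasDerivAt.fun_pow 2)
      (pow_ne_zero 2 hα0)).congr_deriv ?_
    simp
  rw [hψ'.deriv, hψ]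
  field_simp
  ring

end Calculus

section Geodesic

variable {α1 α2 δ : ℝ}

theorem k1c_pos (h2 : α2 ≠ 0) (hsin : sin δ ≠ 0) : 0 < k1c α1 α2 δ := by
  have hsum : k1c α1 α2 δ = (α1 - α2 * cos δ) ^ 2 + (α2 * sin δ) ^ 2 := by
    unfold k1c
    linear_combination (-α2 ^ 2) * sin_sq_add_cos_sq δ
  rw [hsum]
  positivity

theorem Kc_pos (h1 : α1 ≠ 0) (h2 : α2 ≠ 0) (hsin : sin δ ≠ 0) : 0 < Kc α1 α2 δ := by
  unfold Kc
  positivity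

theorem mul_sq_add_div_pos {a K : ℝ} (ha : 0 < a) (hK : 0 < K) (u : ℝ) : 0 < a * u ^ 2 + K / a := by
  positivity

theorem alphaT_pos (hk : 0 < k1c α1 α2 δ) (hK : 0 < Kc α1 α2 δ) (ς : ℝ) :
    0 < alphaT α1 α2 δ ς :=
  sqrt_pos.2 (mul_sq_add_div_pos hk hK _)

theorem hasDerivAt_alphaT (hk : 0 < k1c α1 α2 δ) (hK : 0 < Kc α1 α2 δ) (ς : ℝ) :
    HasDerivAt (alphaT α1 α2 δ)
      (k1c α1 α2 δ * (ς + k2c α1 α2 δ) / alphaT α1 α2 δ ς) ς :=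
  hasDerivAt_sqrt_quadratic (mul_sq_add_div_pos hk hK _).ne'

theorem deriv_deriv_alphaT (hk : 0 < k1c α1 α2 δ) (hK : 0 < Kc α1 α2 δ) (ς : ℝ) :
    deriv (deriv (alphaT α1 α2 δ)) ς = Kc α1 α2 δ / alphaT α1 α2 δ ς ^ 3 := by
  rw [funext fun s => (hasDerivAt_alphaT hk hK s).deriv]
  refine (hasDerivAt_linear_div_sqrt_quadratic (mul_sq_add_div_pos hk hK _)).deriv.trans ?_
  rw [mul_div_cancel₀ _ hk.ne', alphaT]

variable {B : Type*} (ψ1 Δψ : B → ℝ)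

theorem deriv_psiT (hk : 0 < k1c α1 α2 δ) (hK : 0 < Kc α1 α2 δ) (ν : B) :
    deriv (fun t => psiT α1 α2 δ ψ1 Δψ t ν) =
      fun ς => √(Kc α1 α2 δ) * Δψ ν / δ / alphaT α1 α2 δ ς ^ 2 := by
  funext ς
  have hangle := hasDerivAt_arctan_linear_div (b := k2c α1 α2 δ) (t := ς) hk.ne' (sqrt_pos.2 hK).ne'
  refine (((hangle.sub_const _).const_mul (Δψ ν / δ)).const_add (ψ1 ν)).deriv.trans ?_
  rw [alphaT, sq_sqrt (mul_sq_add_div_pos hk hK _).le, sq_sqrt hK.le]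
  ring

theorem psiT_zero (ν : B) : psiT α1 α2 δ ψ1 Δψ 0 ν = ψ1 ν := by
  simp [psiT]

theorem deriv_deriv_alphaT_eq_mul_tsum {w : B → ℝ} {ω0 : ℝ} (hk : 0 < k1c α1 α2 δ)
    (hK : 0 < Kc α1 α2 δ) (hδ0 : δ ≠ 0) (hδ : δ ^ 2 = (1 / ω0) * ∑' ν, w ν * Δψ ν ^ 2) (ς : ℝ) :
    deriv (deriv (alphaT α1 α2 δ)) ς
      = alphaT α1 α2 δ ς * (1 / ω0) *
          ∑' ν, w ν * deriv (fun t => psiT α1 α2 δ ψ1 Δψ t ν) ς ^ 2 := by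
  have hα := alphaT_pos hk hK ς
  have hterm (ν : B) : w ν * deriv (fun t => psiT α1 α2 δ ψ1 Δψ t ν) ς ^ 2
      = w ν * Δψ ν ^ 2 * (Kc α1 α2 δ / (δ ^ 2 * alphaT α1 α2 δ ς ^ 4)) := by
    rw [deriv_psiT ψ1 Δψ hk hK, div_pow, div_pow, mul_pow, sq_sqrt hK.le]
    ring
  calc deriv (deriv (alphaT α1 α2 δ)) ς
      = alphaT α1 α2 δ ς * δ ^ 2 * (Kc α1 α2 δ / (δ ^ 2 * alphaT α1 α2 δ ς ^ 4)) := by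
        rw [deriv_deriv_alphaT hk hK]
        field_simp
    _ = alphaT α1 α2 δ ς * (1 / ω0) *
          ∑' ν, w ν * deriv (fun t => psiT α1 α2 δ ψ1 Δψ t ν) ς ^ 2 := by
        rw [tsum_congr hterm, tsum_mul_right, hδ]
        ring

end Geodesic

/-- No junk value enters: if the series diverged or `ω0` were zero, then `hδ` would read
`δ ^ 2 = 0`, against `sin δ ≠ 0`. -/
theorem stmt15_general {B : Type*} (w Δψ ψ1 : B → ℝ) {ω0 δ α1 α2 : ℝ}
    (hδ : δ ^ 2 = (1 / ω0) * ∑' ν, w ν * Δψ ν ^ 2) (hsin : sin δ ≠ 0)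
    (h1 : α1 ≠ 0) (h2 : α2 ≠ 0) :
    (∀ (ς : ℝ) (ν : B),
        alphaT α1 α2 δ ς ^ 2 * deriv (fun t => psiT α1 α2 δ ψ1 Δψ t ν) ς
          = √(Kc α1 α2 δ) * Δψ ν / δ) ∧
    (∀ ς : ℝ,
        deriv (deriv (alphaT α1 α2 δ)) ς
          = alphaT α1 α2 δ ς * (1 / ω0) *
              ∑' ν, w ν * deriv (fun t => psiT α1 α2 δ ψ1 Δψ t ν) ς ^ 2) ∧
    (∀ (ς : ℝ) (ν : B),
        alphaT α1 α2 δ ς * deriv (deriv (fun t => psiT α1 α2 δ ψ1 Δψ t ν)) ς +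
          2 * deriv (alphaT α1 α2 δ) ς * deriv (fun t => psiT α1 α2 δ ψ1 Δψ t ν) ς = 0) ∧
    (∀ ν : B, psiT α1 α2 δ ψ1 Δψ 0 ν = ψ1 ν) := by
  have hk := k1c_pos (α1 := α1) h2 hsin
  have hK := Kc_pos h1 h2 hsin
  have hα (ς : ℝ) : alphaT α1 α2 δ ς ≠ 0 := (alphaT_pos hk hK ς).ne'
  have hδ0 : δ ≠ 0 := fun h => hsin (by rw [h, sin_zero])
  refine ⟨fun ς ν => ?_, deriv_deriv_alphaT_eq_mul_tsum ψ1 Δψ hk hK hδ0 hδ, fun ς ν => ?_,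
    psiT_zero ψ1 Δψ⟩
  · rw [deriv_psiT ψ1 Δψ hk hK]
    exact mul_div_cancel₀ _ (pow_ne_zero 2 (hα ς))
  · exact mul_deriv_deriv_add_eq_zero_of_deriv_eq_div_sq
      (hasDerivAt_alphaT hk hK ς).differentiableAt (hα ς) (deriv_psiT ψ1 Δψ hk hK ν)

/-- The pair `(α̃, ψ̃)` solves the geodesic equations on `L2(B,α)` with the given
boundary data: (a) `α̃²·∂ψ̃/∂ς` is the constant `√K·Δψ/δ`; (b) the attenuation equation;
(c) the phase equation; (d) `ψ̃(0,·) = ψ1`. -/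
theorem stmt15 {B : Type*} [Fintype B] [Nonempty B]
    (γ0 ρ0 : B → ℝ) (hγ0 : ∀ ν, 0 < γ0 ν) (hρ0 : ∀ ν, 0 < ρ0 ν)
    (w : B → ℝ) (hw : ∀ ν, w ν = 2 * (ρ0 ν)^2 / γ0 ν)
    (ω0 : ℝ) (hω0 : ω0 = ∑ ν : B, w ν)
    (Δψ ψ1 : B → ℝ) (δ : ℝ)
    (hδdef : δ = Real.sqrt ((1 / ω0) * ∑ ν : B, w ν * (Δψ ν)^2))
    (hδ : δ ∈ Set.Ioo 0 Real.pi)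
    (α1 α2 : ℝ) (h1 : 0 < α1) (h2 : 0 < α2) :
    (∀ (ς : ℝ) (ν : B),
        (alphaT α1 α2 δ ς)^2 * deriv (fun t => psiT α1 α2 δ ψ1 Δψ t ν) ς
          = Real.sqrt (Kc α1 α2 δ) * Δψ ν / δ) ∧
    (∀ ς : ℝ,
        deriv (deriv (alphaT α1 α2 δ)) ς
          = alphaT α1 α2 δ ς * (1 / ω0) *
              ∑ ν : B, w ν * (deriv (fun t => psiT α1 α2 δ ψ1 Δψ t ν) ς)^2) ∧
    (∀ (ς : ℝ) (ν : B),
        alphaT α1 α2 δ ς * deriv (deriv (fun t => psiT α1 α2 δ ψ1 Δψ t ν)) ς +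
          2 * deriv (alphaT α1 α2 δ) ς * deriv (fun t => psiT α1 α2 δ ψ1 Δψ t ν) ς = 0) ∧
    (∀ ν : B, psiT α1 α2 δ ψ1 Δψ 0 ν = ψ1 ν) := by
  have hδsq : δ ^ 2 = (1 / ω0) * ∑' ν, w ν * Δψ ν ^ 2 := by
    rw [tsum_fintype, sq]
    exact (sqrt_eq_iff_mul_self_eq_of_pos hδ.1).1 hδdef.symm
  simpa only [tsum_fintype] using
    stmt15_general w Δψ ψ1 hδsq (sin_pos_of_mem_Ioo hδ).ne' h1.ne' h2.ne'
end

section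
/- Let Δψ : B → ℝ, assume δ := √( (1/ω0)·Σ_{ν∈B} w(ν)·Δψ(ν)² ) lies in (0, π), let α1, α2 > 0, define k1, k2, K, α̃ accordingly, and set c(ν) := √K·Δψ(ν)/δ. Then the Fisher–Rao length of the geodesic on L2(B,α) evaluates in closed form: ∫₀¹ √( ω0·(α̃'(ς))² + (1/α̃(ς)²)·Σ_{ν∈B} w(ν)·c(ν)² ) dς = √(ω0·k1) = √ω0 · √( α1² + α2² − 2·α1·α2·cos δ ). -/
/-!
In the Euclidean plane let a point travel at constant velocity from `(α1, 0)` to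
`(α2 cos δ, α2 sin δ)` in unit time. Its squared speed is `k1`, its squared angular momentum is `K`,
and its distance from the origin is `α̃`. The decomposition `ṙ² + K / r² = k1` of the squared speed
into radial and angular parts shows that the Fisher–Rao speed is the constant `√(ω0 k1)`, because
the phase increments are normalised so that `∑ w c² = ω0 K`.
-/

/-- Distance from the origin, at time `x`, of a point of the Euclidean plane that moves along a
straight line with squared speed `k` and squared angular momentum `K` and is closest to the origin
at time `-b`. The least distance is `√(K / k)`, meaningful for `k ≠ 0` only. -/
noncomputable def lineRadius (k b K x : ℝ) : ℝ := √(k * (x + b) ^ 2 + K / k)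

section LineRadius

variable {k K : ℝ} (b x : ℝ)

theorem sq_lineRadius (hk : 0 ≤ k) (hK : 0 ≤ K) :
    lineRadius k b K x ^ 2 = k * (x + b) ^ 2 + K / k :=
  Real.sq_sqrt (by positivity)

variable {b x}

theorem lineRadius_pos (hk : 0 < k) (hK : 0 ≤ K) (hx : x + b ≠ 0) : 0 < lineRadius k b K x :=
  Real.sqrt_pos.2 (by positivity)

theorem hasDerivAt_lineRadius (hr : lineRadius k b K x ≠ 0) :
    HasDerivAt (lineRadius k b K) (k * (x + b) / lineRadius k b K x) x := by
  have radicand_ne_zero : k * (x + b) ^ 2 + K / k ≠ 0 := fun h =>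
    hr (by rw [lineRadius, h, Real.sqrt_zero])
  have hasDerivAt_radicand :
      HasDerivAt (fun y => k * (y + b) ^ 2 + K / k) (2 * (k * (x + b))) x := by
    have hasDerivAt_sq := ((hasDerivAt_id' x).add_const b).fun_pow 2
    exact ((hasDerivAt_sq.const_mul k).add_const (K / k)).congr_deriv (by ring)
  exact (hasDerivAt_radicand.sqrt radicand_ne_zero).congr_deriv
    (mul_div_mul_left _ _ two_ne_zero)

theorem deriv_lineRadius_sq_add_div_sq (hk : 0 < k) (hK : 0 ≤ K) (hx : x + b ≠ 0) :
    deriv (lineRadius k b K) x ^ 2 + K / lineRadius k b K x ^ 2 = k := by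
  have radius_ne_zero := (lineRadius_pos hk hK hx).ne'
  rw [(hasDerivAt_lineRadius radius_ne_zero).deriv, div_pow, ← add_div,
    div_eq_iff (pow_ne_zero 2 radius_ne_zero), sq_lineRadius b x hk.le hK]
  field_simp

theorem integral_sqrt_deriv_lineRadius_sq_add (hk : 0 < k) (hK : 0 ≤ K) (ω s t : ℝ) :
    ∫ x in s..t, √(ω * deriv (lineRadius k b K) x ^ 2 + 1 / lineRadius k b K x ^ 2 * (ω * K)) =
      (t - s) * √(ω * k) := by
  -- When `K = 0` the line meets the origin at time `-b`, where the radius is not differentiable.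
  have ae_ne : ∀ᵐ x : ℝ, x ≠ -b := MeasureTheory.Measure.ae_ne _ _
  calc
    _ = ∫ _ in s..t, √(ω * k) := by
      refine intervalIntegral.integral_congr_ae (ae_ne.mono fun x hx _ => congrArg Real.sqrt ?_)
      have speed_sq := deriv_lineRadius_sq_add_div_sq hk hK (mt eq_neg_of_add_eq_zero_left hx)
      linear_combination ω * speed_sq
    _ = (t - s) * √(ω * k) := by rw [intervalIntegral.integral_const, smul_eq_mul]

end LineRadius

theorem eq_mul_sq_of_eq_sqrt_one_div_mul {δ ω S : ℝ} (hδ : δ = √(1 / ω * S)) (hδ₀ : δ ≠ 0) :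
    S = ω * δ ^ 2 := by
  have radicand_pos : 0 < 1 / ω * S := Real.sqrt_ne_zero'.1 (hδ ▸ hδ₀)
  have ω_ne_zero : ω ≠ 0 := by
    rintro rfl
    simp at radicand_pos
  rw [hδ, Real.sq_sqrt radicand_pos.le]
  field_simp

theorem sum_mul_sq_mul_div {ι : Type*} (s : Finset ι) (w f : ι → ℝ) {δ ω : ℝ} (a : ℝ)
    (hf : ∑ i ∈ s, w i * f i ^ 2 = ω * δ ^ 2) (hδ : δ ≠ 0) :
    ∑ i ∈ s, w i * (a * f i / δ) ^ 2 = ω * a ^ 2 :=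
  calc
    ∑ i ∈ s, w i * (a * f i / δ) ^ 2 = (a / δ) ^ 2 * ∑ i ∈ s, w i * f i ^ 2 := by
      rw [Finset.mul_sum]
      exact Finset.sum_congr rfl fun i _ => by ring
    _ = ω * a ^ 2 := by
      rw [hf]
      field_simp

theorem k1c_eq_sq_add_sq (α1 α2 δ : ℝ) :
    k1c α1 α2 δ = (α1 - α2 * Real.cos δ) ^ 2 + (α2 * Real.sin δ) ^ 2 := by
  rw [k1c]
  linear_combination -α2 ^ 2 * Real.sin_sq_add_cos_sq δ

theorem k1c_nonneg (α1 α2 δ : ℝ) : 0 ≤ k1c α1 α2 δ := by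
  rw [k1c_eq_sq_add_sq]
  positivity

theorem k1c_ne_zero (α1 : ℝ) {α2 δ : ℝ} (hα2 : α2 ≠ 0) (hδ : Real.sin δ ≠ 0) :
    k1c α1 α2 δ ≠ 0 := by
  rw [k1c_eq_sq_add_sq]
  positivity

theorem Kc_nonneg (α1 α2 δ : ℝ) : 0 ≤ Kc α1 α2 δ := by
  rw [Kc]
  positivity

theorem stmt16_general {B : Type*} [Fintype B] (w : B → ℝ) (hw : ∀ ν, 0 ≤ w ν)
    (ω0 : ℝ) (hω0 : ω0 = ∑ ν : B, w ν) (Δψ : B → ℝ) (δ : ℝ)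
    (hδdef : δ = √((1 / ω0) * ∑ ν : B, w ν * (Δψ ν) ^ 2)) (hδ : δ ≠ 0)
    (α1 α2 : ℝ) (hk : k1c α1 α2 δ ≠ 0)
    (c : B → ℝ) (hc : ∀ ν, c ν = √(Kc α1 α2 δ) * Δψ ν / δ) :
    (∫ ς in (0 : ℝ)..1,
        √(ω0 * (deriv (alphaT α1 α2 δ) ς) ^ 2 +
          (1 / (alphaT α1 α2 δ ς) ^ 2) * ∑ ν : B, w ν * (c ν) ^ 2))
      = √(ω0 * k1c α1 α2 δ) ∧
    √(ω0 * k1c α1 α2 δ)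
      = √ω0 * √(α1 ^ 2 + α2 ^ 2 - 2 * α1 * α2 * Real.cos δ) := by
  have hK := Kc_nonneg α1 α2 δ
  have k1c_pos : 0 < k1c α1 α2 δ := (k1c_nonneg α1 α2 δ).lt_of_ne' hk
  have alphaT_eq : alphaT α1 α2 δ = lineRadius (k1c α1 α2 δ) (k2c α1 α2 δ) (Kc α1 α2 δ) := rfl
  have sum_sq : ∑ ν, w ν * c ν ^ 2 = ω0 * Kc α1 α2 δ := by
    simp_rw [hc]
    rw [sum_mul_sq_mul_div _ w Δψ _ (eq_mul_sq_of_eq_sqrt_one_div_mul hδdef hδ) hδ,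
      Real.sq_sqrt hK]
  constructor
  · rw [alphaT_eq, sum_sq, integral_sqrt_deriv_lineRadius_sq_add k1c_pos hK, sub_zero, one_mul]
  · have ω0_nonneg : 0 ≤ ω0 := hω0 ▸ Finset.sum_nonneg fun ν _ => hw ν
    exact Real.sqrt_mul ω0_nonneg _

/-- Closed form for the Fisher–Rao length of the geodesic on `L2(B,α)`:
`∫₀¹ √( ω0·(α̃')² + (1/α̃²)·Σ_ν w(ν)·c(ν)² ) dς = √(ω0·k1)
  = √ω0·√(α1² + α2² − 2·α1·α2·cos δ)`, with `c(ν) = √K·Δψ(ν)/δ`. -/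
theorem stmt16 {B : Type*} [Fintype B] [Nonempty B]
    (γ0 ρ0 : B → ℝ) (hγ0 : ∀ ν, 0 < γ0 ν) (hρ0 : ∀ ν, 0 < ρ0 ν)
    (w : B → ℝ) (hw : ∀ ν, w ν = 2 * (ρ0 ν)^2 / γ0 ν)
    (ω0 : ℝ) (hω0 : ω0 = ∑ ν : B, w ν)
    (Δψ : B → ℝ) (δ : ℝ)
    (hδdef : δ = Real.sqrt ((1 / ω0) * ∑ ν : B, w ν * (Δψ ν)^2))
    (hδ : δ ∈ Set.Ioo 0 Real.pi)
    (α1 α2 : ℝ) (h1 : 0 < α1) (h2 : 0 < α2)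
    (c : B → ℝ) (hc : ∀ ν, c ν = Real.sqrt (Kc α1 α2 δ) * Δψ ν / δ) :
    (∫ ς in (0:ℝ)..1,
        Real.sqrt (ω0 * (deriv (alphaT α1 α2 δ) ς)^2 +
          (1 / (alphaT α1 α2 δ ς)^2) * ∑ ν : B, w ν * (c ν)^2))
      = Real.sqrt (ω0 * k1c α1 α2 δ) ∧
    Real.sqrt (ω0 * k1c α1 α2 δ)
      = Real.sqrt ω0 * Real.sqrt (α1^2 + α2^2 - 2*α1*α2*Real.cos δ) := by
  exact stmt16_general w (fun ν => hw ν ▸ div_nonneg (by positivity) (hγ0 ν).le) ω0 hω0 Δψ δ hδdef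
    hδ.1.ne' α1 α2 (k1c_ne_zero α1 h2.ne' (Real.sin_pos_of_mem_Ioo hδ).ne') c hc
end
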